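/- arXiv:2012.14861 — 3 statements merged into one kernel-verified Lean document; each statement's English description precedes it below -/
import Mathlib

section
/- Suppose σ^d(a)·b = σ(a)·σ^d(b). Fix an integer k ≥ d+1 and define elements z_{j,i} ∈ F_{q^n} for 0 ≤ i ≤ j by the recursion: z_{0,0} = 1; z_{j,0} = z_{j−1,0} · σ^{k−(j−1)d−1}(a); z_{j,i} = z_{j−1,i} · σ^{k−(j−1)d+i−1}(a) for 0 < i < j; and z_{j,j} = z_{j−1,j−1} · σ^{k−(j−1)d+j−2}(b), where powers of σ are taken modulo n. Then for every j with 0 ≤ j ≤ ⌊(k−1)/d⌋ + 1 and every l with 1 ≤ l ≤ d, one has M_{l,k} = Σ_{i=0}^{j} binom(j,i) · z_{j,i} · M_{l,k−jd+i}; moreover, for 0 < i < j one has z_{j−1,i} · σ^{k−(j−1)d+i−1}(a) = z_{j−1,i−1} · σ^{k−(j−1)d+i−2}(b). -/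
/-- The `σ`-companion matrix `C_L` of `L(x) = −x^{σ^d} + b·x^σ + a·x`: its `(i+1,i)`-entries
(1-based) equal `1` for `i = 1, …, d-1`, its last column is `(a, b, 0, …, 0)ᵀ`, and all
remaining entries are `0`. (Indices here are 0-based.) -/
def companionCL (L : Type*) [Field L] (d : ℕ) (a b : L) : Matrix (Fin d) (Fin d) L :=
  fun i j =>
    if (i : ℕ) = (j : ℕ) + 1 then 1
    else if (j : ℕ) = d - 1 ∧ (i : ℕ) = 0 then a
    else if (j : ℕ) = d - 1 ∧ (i : ℕ) = 1 then b
    else 0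

/-- `A_k = C_L · C_L^σ · ⋯ · C_L^{σ^{k-1}}`, where `C^{σ^i}` applies `σ^i` entrywise. -/
noncomputable def Amat {K L : Type*} [Field K] [Field L] [Algebra K L]
    (σ : L ≃ₐ[K] L) (d : ℕ) (a b : L) (k : ℕ) : Matrix (Fin d) (Fin d) L :=
  ((List.range k).map (fun i => (companionCL L d a b).map ⇑(σ ^ i : L ≃ₐ[K] L))).prod

/-!
Write `α m = σ^(m-1) a` and `β m = σ^(m-1) b`. Right multiplication by the companion matrix
shifts columns to the left, so every row of `A_m` is a window of length `d` of one sequence, which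
satisfies `u m = u (m - d) α m + u (m - d + 1) β m` for `m > 0`. Applying powers of `σ` to the
hypothesis on `a` and `b` gives `α (m + d) β m = α (m + 1) β (m + d)`. This exchange law makes
passing from `z_{j,i}` to `z_{j+1,i+1}` a multiplication by `β` for every `i ≤ j`, and not only
on the diagonal. Unfolding the recurrence in each term of the `j`-th expansion then produces the
`(j + 1)`-st one by Pascal's rule.
-/

section TwistedPascal

variable {R : Type*} [CommSemiring R] {α β : ℤ → R} {d : ℕ} {k : ℤ} {z : ℕ → ℕ → R}

/-- The triangular array of coefficients `z j i`, `i ≤ j`, that appears when the recurrence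
`u m = u (m - d) * α m + u (m - d + 1) * β m` is unfolded `j` times starting from `u k`: the index
`k - j * d + i` is reached with coefficient `j.choose i * z j i`. Entries with `j < i` are
unconstrained. -/
structure IsTwistedPascal (α β : ℤ → R) (d : ℕ) (k : ℤ) (z : ℕ → ℕ → R) : Prop where
  zero_zero : z 0 0 = 1
  succ_left : ∀ j i : ℕ, i ≤ j → z (j + 1) i = z j i * α (k - j * d + i)
  succ_diag : ∀ j : ℕ, z (j + 1) (j + 1) = z j j * β (k - j * d + j)

namespace IsTwistedPascal

theorem succ_succ (hz : IsTwistedPascal α β d k z)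
    (exchange : ∀ m, α (m + d) * β m = α (m + 1) * β (m + d)) {j i : ℕ} (hij : i ≤ j) :
    z (j + 1) (i + 1) = z j i * β (k - j * d + i) := by
  induction j generalizing i with
  | zero =>
    obtain rfl : i = 0 := by omega
    exact hz.succ_diag 0
  | succ j ih =>
    obtain rfl | hlt := hij.eq_or_lt
    · exact hz.succ_diag (j + 1)
    have hi : i ≤ j := by omega
    set m : ℤ := k - (j + 1 : ℕ) * d + i with hm
    have hshift : k - j * d + i = m + d := by rw [hm]; push_cast; ring
    calc z (j + 1 + 1) (i + 1) = z (j + 1) (i + 1) * α (m + 1) := by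
          rw [hz.succ_left _ _ hlt, hm, Nat.cast_succ i, add_assoc]
      _ = z j i * (α (m + 1) * β (m + d)) := by rw [ih hi, hshift]; ring
      _ = z j i * α (m + d) * β m := by rw [← exchange, mul_assoc]
      _ = z (j + 1) i * β m := by rw [hz.succ_left j i hi, hshift]

theorem mul_left_eq_mul_right (hz : IsTwistedPascal α β d k z)
    (exchange : ∀ m, α (m + d) * β m = α (m + 1) * β (m + d)) {j i : ℕ} (hij : i < j) :
    z j (i + 1) * α (k - j * d + (i + 1 : ℕ)) = z j i * β (k - j * d + i) := by
  rw [← hz.succ_left j (i + 1) hij, hz.succ_succ exchange hij.le]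

theorem eq_sum_choose_mul (hz : IsTwistedPascal α β d k z)
    (exchange : ∀ m, α (m + d) * β m = α (m + 1) * β (m + d)) {u : ℤ → R}
    (recurrence : ∀ m, 0 < m → u m = u (m - d) * α m + u (m - d + 1) * β m)
    {j : ℕ} (hj : j * d < k + d) :
    u k = ∑ i ∈ Finset.range (j + 1), (j.choose i : R) * (z j i * u (k - j * d + i)) := by
  induction j with
  | zero => simp [hz.zero_zero]
  | succ j ih =>
    have hjk : j * d < k := by push_cast at hj; linarith
    have unfold_term : ∀ i ∈ Finset.range (j + 1), z j i * u (k - j * d + i) =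
        z (j + 1) i * u (k - (j + 1 : ℕ) * d + i) +
          z (j + 1) (i + 1) * u (k - (j + 1 : ℕ) * d + (i + 1 : ℕ)) := by
      intro i hi
      have hij : i ≤ j := Finset.mem_range_succ_iff.mp hi
      have hleft : k - (j + 1 : ℕ) * d + i = k - j * d + i - d := by push_cast; ring
      have hright : k - (j + 1 : ℕ) * d + (i + 1 : ℕ) = k - j * d + i - d + 1 := by
        push_cast; ring
      rw [recurrence _ (by linarith), hz.succ_left j i hij, hz.succ_succ exchange hij, hleft,
        hright]
      ring
    rw [ih (by linarith),
      Finset.sum_choose_succ_mul (fun i _ ↦ z (j + 1) i * u (k - (j + 1 : ℕ) * d + i)),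
      ← Finset.sum_add_distrib]
    exact Finset.sum_congr rfl fun i hi ↦ by rw [unfold_term i hi, mul_add]

end IsTwistedPascal

end TwistedPascal

theorem mul_lt_add_of_le_pred_div_add_one {j k d : ℕ} (hk : 0 < k) (hj : j ≤ (k - 1) / d + 1) :
    j * d < k + d :=
  calc j * d ≤ ((k - 1) / d + 1) * d := Nat.mul_le_mul_right d hj
    _ = (k - 1) / d * d + d := Nat.succ_mul _ _
    _ ≤ k - 1 + d := Nat.add_le_add_right (Nat.div_mul_le_self _ _) d
    _ < k + d := by omega

section Companion

variable {L : Type*} [Field L] {d : ℕ}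

theorem companionCL_map {L' : Type*} [Field L'] (f : L →+* L') (a b : L) :
    (companionCL L d a b).map f = companionCL L' d (f a) (f b) := by
  ext i j
  simp only [companionCL, Matrix.map_apply, apply_ite f, map_one, map_zero]

theorem mul_companionCL_apply_of_lt {ι : Type*} (N : Matrix ι (Fin d) L) (a b : L) (r : ι)
    {c : Fin d} (hc : (c : ℕ) + 1 < d) :
    (N * companionCL L d a b) r c = N r ⟨c + 1, hc⟩ := by
  rw [Matrix.mul_apply, Finset.sum_eq_single ⟨c + 1, hc⟩]
  · simp [companionCL]
  · intro x _ hx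
    have hx' : (x : ℕ) ≠ c + 1 := fun h ↦ hx (Fin.ext h)
    have hc' : (c : ℕ) ≠ d - 1 := by omega
    simp [companionCL, hx', hc']
  · simp

theorem mul_companionCL_apply_last {ι : Type*} (hd : 2 ≤ d) (N : Matrix ι (Fin d) L) (a b : L)
    (r : ι) :
    (N * companionCL L d a b) r ⟨d - 1, by omega⟩ =
      N r ⟨0, by omega⟩ * a + N r ⟨1, by omega⟩ * b := by
  rw [Matrix.mul_apply, Fintype.sum_eq_add (⟨0, by omega⟩ : Fin d) ⟨1, by omega⟩ (by simp)]
  · have hd' : d - 1 ≠ 0 := by omega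
    simp [companionCL, hd']
  · rintro x ⟨hx0, hx1⟩
    rw [ne_eq, Fin.ext_iff] at hx0 hx1
    have hx : (x : ℕ) ≠ d - 1 + 1 := by omega
    simp [companionCL, hx, hx0, hx1]

end Companion

theorem algEquiv_zpow_apply_exchange {R A : Type*} [CommSemiring R] [Semiring A] [Algebra R A]
    {σ : A ≃ₐ[R] A} {d : ℕ} {a b : A} (hab : (σ ^ d) a * b = σ a * (σ ^ d) b) (e : ℤ) :
    (σ ^ (e + d)) a * (σ ^ e) b = (σ ^ (e + 1)) a * (σ ^ (e + d)) b := by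
  simpa [zpow_add, AlgEquiv.mul_apply] using congrArg (σ ^ e) hab

section LastColumn

variable {K L : Type*} [Field K] [Field L] [Algebra K L] {σ : L ≃ₐ[K] L} {d : ℕ} {a b : L}

theorem Amat_zero : Amat σ d a b 0 = 1 := by
  simp [Amat]

theorem Amat_succ (m : ℕ) :
    Amat σ d a b (m + 1) = Amat σ d a b m * companionCL L d ((σ ^ m) a) ((σ ^ m) b) := by
  rw [Amat, List.prod_range_succ, ← Amat]
  exact congrArg _ (companionCL_map ((σ ^ m : L ≃ₐ[K] L) : L →+* L) a b)

/-- `u` is the sequence `M_{l,·}` of the row `l = r + 1`: the entries `(r, d - 1)` of `A_m` for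
`m > 0`, extended to `m ≤ 0` by the indicator of `m = l - d`. -/
structure IsLastColumnSeq (σ : L ≃ₐ[K] L) (a b : L) (r : Fin d) (u : ℤ → L) : Prop where
  of_pos : ∀ m : ℕ, 0 < m → u m = Amat σ d a b m r ⟨d - 1, Nat.sub_one_lt_of_lt r.isLt⟩
  eq_one : u (r + 1 - d) = 1
  eq_zero : ∀ m : ℤ, m ≤ 0 → m ≠ r + 1 - d → u m = 0

namespace IsLastColumnSeq

variable {r : Fin d} {u : ℤ → L}

theorem Amat_apply (hu : IsLastColumnSeq σ a b r u) (m : ℕ) (c : Fin d) :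
    Amat σ d a b m r c = u (m - d + c + 1) := by
  induction m generalizing c with
  | zero =>
    obtain rfl | hrc := eq_or_ne r c
    · rw [Amat_zero, Matrix.one_apply_eq, ← hu.eq_one]
      congr 1
      push_cast
      ring
    · rw [Amat_zero, Matrix.one_apply_ne hrc, hu.eq_zero _ (by omega) (by omega)]
  | succ m ih =>
    by_cases hc : (c : ℕ) + 1 < d
    · rw [Amat_succ, mul_companionCL_apply_of_lt _ _ _ _ hc, ih]
      congr 1
      push_cast
      ring
    · obtain rfl : c = ⟨d - 1, Nat.sub_one_lt_of_lt r.isLt⟩ := Fin.ext (by simp only; omega)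
      rw [← hu.of_pos (m + 1) m.succ_pos]
      congr 1
      simp only
      omega

theorem recurrence (hu : IsLastColumnSeq σ a b r u) (hd : 2 ≤ d) (m : ℤ) (hm : 0 < m) :
    u m = u (m - d) * (σ ^ (m - 1)) a + u (m - d + 1) * (σ ^ (m - 1)) b := by
  obtain ⟨t, rfl⟩ : ∃ t : ℕ, m = (t + 1 : ℕ) := ⟨(m - 1).toNat, by omega⟩
  rw [hu.of_pos _ t.succ_pos, Amat_succ, mul_companionCL_apply_last hd, hu.Amat_apply,
    hu.Amat_apply, show ((t + 1 : ℕ) : ℤ) - 1 = t by simp, zpow_natCast]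
  congr 3 <;> push_cast <;> ring

end IsLastColumnSeq

end LastColumn

theorem stmt_10_general {K L : Type*} [Field K] [Field L] [Algebra K L]
    (σ : L ≃ₐ[K] L) (d : ℕ) (hd : 2 ≤ d) (a b : L)
    (M : ℕ → ℤ → L)
    (hMpos : ∀ (l : ℕ) (hl1 : 1 ≤ l) (hl2 : l ≤ d) (k : ℕ), 1 ≤ k →
      M l k = Amat σ d a b k ⟨l - 1, by omega⟩ ⟨d - 1, by omega⟩)
    (hMdiag : ∀ (l : ℕ), 1 ≤ l → l ≤ d → M l ((l : ℤ) - d) = 1)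
    (hMzero : ∀ (l : ℕ), 1 ≤ l → l ≤ d → ∀ k : ℤ, k ≤ 0 → k ≠ (l : ℤ) - d → M l k = 0)
    (hab : (σ ^ d) a * b = σ a * (σ ^ d) b)
    (k : ℕ) (hk : 1 ≤ k)
    (z : ℕ → ℕ → L)
    (hz00 : z 0 0 = 1)
    (hzj0 : ∀ j : ℕ, 1 ≤ j →
      z j 0 = z (j - 1) 0 * (σ ^ ((k : ℤ) - ((j : ℤ) - 1) * d - 1)) a)
    (hzji : ∀ j i : ℕ, 0 < i → i < j →
      z j i = z (j - 1) i * (σ ^ ((k : ℤ) - ((j : ℤ) - 1) * d + i - 1)) a)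
    (hzjj : ∀ j : ℕ, 1 ≤ j →
      z j j = z (j - 1) (j - 1) * (σ ^ ((k : ℤ) - ((j : ℤ) - 1) * d + j - 2)) b) :
    (∀ j : ℕ, j ≤ (k - 1) / d + 1 → ∀ l : ℕ, 1 ≤ l → l ≤ d →
        M l (k : ℤ) = ∑ i ∈ Finset.range (j + 1),
          (j.choose i : L) * z j i * M l ((k : ℤ) - (j : ℤ) * d + i))
      ∧ (∀ j i : ℕ, 0 < i → i < j →
          z (j - 1) i * (σ ^ ((k : ℤ) - ((j : ℤ) - 1) * d + i - 1)) a
            = z (j - 1) (i - 1) * (σ ^ ((k : ℤ) - ((j : ℤ) - 1) * d + i - 2)) b) := by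
  have hz : IsTwistedPascal (fun m ↦ (σ ^ (m - 1)) a) (fun m ↦ (σ ^ (m - 1)) b) d k z :=
    { zero_zero := hz00
      succ_left := fun j i hij ↦ by
        obtain rfl | hi := i.eq_zero_or_pos
        · simpa using hzj0 (j + 1) j.succ_pos
        · simpa using hzji (j + 1) i hi (by omega)
      succ_diag := fun j ↦ by
        rw [hzjj (j + 1) j.succ_pos, Nat.add_sub_cancel]
        congr 3
        push_cast
        ring }
  have exchange (m : ℤ) : (σ ^ (m + d - 1)) a * (σ ^ (m - 1)) b =
      (σ ^ (m + 1 - 1)) a * (σ ^ (m + d - 1)) b := by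
    convert algEquiv_zpow_apply_exchange hab (m - 1) using 4 <;> ring
  constructor
  · intro j hj l hl1 hl2
    have hrow : ((l - 1 : ℕ) : ℤ) + 1 - d = l - d := by omega
    have hM : IsLastColumnSeq (d := d) σ a b ⟨l - 1, by omega⟩ (M l) :=
      { of_pos := hMpos l hl1 hl2
        eq_one := hrow ▸ hMdiag l hl1 hl2
        eq_zero := hrow ▸ hMzero l hl1 hl2 }
    have hjd : (j : ℤ) * d < k + d := mod_cast mul_lt_add_of_le_pred_div_add_one hk hj
    simpa only [mul_assoc] using hz.eq_sum_choose_mul exchange (hM.recurrence hd) hjd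
  · intro j i hi hij
    obtain ⟨j, rfl⟩ := Nat.exists_eq_add_one_of_ne_zero (by omega : j ≠ 0)
    obtain ⟨i, rfl⟩ := Nat.exists_eq_add_one_of_ne_zero hi.ne'
    convert hz.mul_left_eq_mul_right exchange (by omega : i < j) using 4 <;> push_cast <;> ring

/-- (Lemma `trianglepascal`.) Suppose `σ^d(a)·b = σ(a)·σ^d(b)`. Fix
`k ≥ d+1` and let `z j i` be given by the stated recursion (integer powers of `σ`, i.e.
"modulo n"). Then for every `j ≤ ⌊(k-1)/d⌋ + 1` and `1 ≤ l ≤ d`,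
`M l k = Σ_{i=0}^j C(j,i)·z j i·M l (k - jd + i)`; moreover, for `0 < i < j`,
`z (j-1) i · σ^{k-(j-1)d+i-1}(a) = z (j-1) (i-1) · σ^{k-(j-1)d+i-2}(b)`. -/
theorem stmt_10
    (p q : ℕ) (hp : p.Prime) (hq : ∃ m : ℕ, 0 < m ∧ q = p ^ m)
    (K L : Type*) [Field K] [Field L] [Fintype K] [Fintype L] [Algebra K L]
    (hcardK : Fintype.card K = q)
    (n : ℕ) (hn : 0 < n) (hcardL : Fintype.card L = q ^ n)
    (s : ℕ) (hs : 0 < s) (hsn : Nat.gcd s n = 1)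
    (σ : L ≃ₐ[K] L) (hσ : ∀ x : L, σ x = x ^ q ^ s)
    (d : ℕ) (hd : 3 ≤ d) (a b : L)
    (M : ℕ → ℤ → L)
    (hMpos : ∀ (l : ℕ) (hl1 : 1 ≤ l) (hl2 : l ≤ d) (k : ℕ), 1 ≤ k →
      M l k = Amat σ d a b k ⟨l - 1, by omega⟩ ⟨d - 1, by omega⟩)
    (hMdiag : ∀ (l : ℕ), 1 ≤ l → l ≤ d → M l ((l : ℤ) - d) = 1)
    (hMzero : ∀ (l : ℕ), 1 ≤ l → l ≤ d → ∀ k : ℤ, k ≤ 0 → k ≠ (l : ℤ) - d → M l k = 0)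
    (hab : (σ ^ d) a * b = σ a * (σ ^ d) b)
    (k : ℕ) (hk : d + 1 ≤ k)
    (z : ℕ → ℕ → L)
    (hz00 : z 0 0 = 1)
    (hzj0 : ∀ j : ℕ, 1 ≤ j →
      z j 0 = z (j - 1) 0 * (σ ^ ((k : ℤ) - ((j : ℤ) - 1) * d - 1)) a)
    (hzji : ∀ j i : ℕ, 0 < i → i < j →
      z j i = z (j - 1) i * (σ ^ ((k : ℤ) - ((j : ℤ) - 1) * d + i - 1)) a)
    (hzjj : ∀ j : ℕ, 1 ≤ j →
      z j j = z (j - 1) (j - 1) * (σ ^ ((k : ℤ) - ((j : ℤ) - 1) * d + j - 2)) b) :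
    (∀ j : ℕ, j ≤ (k - 1) / d + 1 → ∀ l : ℕ, 1 ≤ l → l ≤ d →
        M l (k : ℤ) = ∑ i ∈ Finset.range (j + 1),
          (j.choose i : L) * z j i * M l ((k : ℤ) - (j : ℤ) * d + i))
      ∧ (∀ j i : ℕ, 0 < i → i < j →
          z (j - 1) i * (σ ^ ((k : ℤ) - ((j : ℤ) - 1) * d + i - 1)) a
            = z (j - 1) (i - 1) * (σ ^ ((k : ℤ) - ((j : ℤ) - 1) * d + i - 2)) b) :=
  stmt_10_general σ d (by omega) a b M hMpos hMdiag hMzero hab k (by omega) z hz00 hzj0 hzji hzjj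
end

section
/- Let d ≥ 3, n = d²−1, and let a ∈ F_{q^n} with a ≠ 0 and b = (∏_{i=1}^{d−1} σ^{id}(a))^{−1}. Then σ^d(a)·b = σ(a)·σ^d(b), and consequently σ^{k−1}(a)·σ^{k−d−1}(b) = σ^{k−d}(a)·σ^{k−1}(b) for every integer k ≥ d+1, where powers of σ are taken modulo n. -/
/-!
Apply `σ^d` to `P = ∏_{i=1}^{d-1} σ^{id}(a)`: every factor moves to the next one, so `P` loses the
factor `σ^d(a)` and gains `σ^{d²}(a)`. Since `σ` has order dividing `d² - 1`, the new factor is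
`σ(a)`, and inverting `σ^d(a) · σ^d(P) = P · σ(a)` gives the first identity. The identities for
general `k` are its images under powers of `σ`.
-/

open Finset Function

theorem iterate_eq_id_of_card_eq_pow {G₀ : Type*} [GroupWithZero G₀] [Fintype G₀] {q n s : ℕ}
    (hcard : Fintype.card G₀ = q ^ n) {f : G₀ → G₀} (hf : ∀ x, f x = x ^ q ^ s) : f^[n] = id := by
  funext x
  calc f^[n] x = x ^ (q ^ s) ^ n := by rw [funext hf, pow_iterate]
    _ = x ^ Fintype.card G₀ ^ s := by rw [hcard, pow_right_comm]
    _ = x := FiniteField.pow_card_pow s x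

theorem iterate_mul_self_of_iterate_sq_sub_one {α : Type*} {f : α → α} {d : ℕ} (hd : 0 < d)
    (hf : f^[d ^ 2 - 1] = id) : f^[d * d] = f := by
  rw [← sq, ← Nat.sub_add_cancel (Nat.pow_pos hd : 0 < d ^ 2), iterate_succ, hf, id_comp]

section Iterate

variable {F : Type*}

theorem iterate_mul_iterate_prod_Icc {M : Type*} [CommMonoid M] [FunLike F M M]
    [MonoidHomClass F M M] (f : F) (a : M) (d m : ℕ) :
    f^[d] a * f^[d] (∏ i ∈ Icc 1 m, f^[i * d] a) =
      (∏ i ∈ Icc 1 m, f^[i * d] a) * f^[(m + 1) * d] a := by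
  induction m with
  | zero => simp [iterate_map_one]
  | succ m ih =>
    rw [prod_Icc_succ_top (Nat.le_add_left 1 m), iterate_map_mul, ← mul_assoc, ih,
      ← iterate_add_apply, Nat.succ_mul (m + 1), add_comm d]

section GroupWithZero

variable {G₀ : Type*} [GroupWithZero G₀] [FunLike F G₀ G₀] [MonoidWithZeroHomClass F G₀ G₀]

theorem iterate_map_ne_zero (f : F) {a : G₀} (ha : a ≠ 0) (j : ℕ) : f^[j] a ≠ 0 :=
  Iterate.rec (· ≠ 0) ha (fun _ ↦ (map_ne_zero f).2) j

theorem iterate_map_inv₀ (f : F) (j : ℕ) (a : G₀) : f^[j] a⁻¹ = (f^[j] a)⁻¹ :=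
  Function.Commute.iterate_left (map_inv₀ f) j a

end GroupWithZero

variable {G₀ : Type*} [CommGroupWithZero G₀] [FunLike F G₀ G₀] [MonoidWithZeroHomClass F G₀ G₀]

theorem iterate_mul_inv_prod_Icc (f : F) {a : G₀} (ha : a ≠ 0) (d m : ℕ) :
    f^[d] a * (∏ i ∈ Icc 1 m, f^[i * d] a)⁻¹ =
      f^[(m + 1) * d] a * f^[d] (∏ i ∈ Icc 1 m, f^[i * d] a)⁻¹ := by
  have prod_ne_zero : ∏ i ∈ Icc 1 m, f^[i * d] a ≠ 0 :=
    prod_ne_zero_iff.2 fun i _ ↦ iterate_map_ne_zero f ha (i * d)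
  rw [iterate_map_inv₀, ← div_eq_mul_inv, ← div_eq_mul_inv,
    div_eq_div_iff prod_ne_zero (iterate_map_ne_zero f prod_ne_zero d),
    iterate_mul_iterate_prod_Icc, mul_comm]

theorem stmt_11_general (σ : F) {d : ℕ} (hd : 0 < d) {a b : G₀} (ha : a ≠ 0)
    (hσ : σ^[d * d] a = σ a) (hb : b = (∏ i ∈ Icc 1 (d - 1), σ^[i * d] a)⁻¹) :
    σ^[d] a * b = σ a * σ^[d] b ∧
      ∀ k : ℕ, d + 1 ≤ k → σ^[k - 1] a * σ^[k - d - 1] b = σ^[k - d] a * σ^[k - 1] b := by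
  have base : σ^[d] a * b = σ a * σ^[d] b := by
    have shift := iterate_mul_inv_prod_Icc σ ha d (d - 1)
    rwa [Nat.sub_add_cancel hd, hσ, ← hb] at shift
  refine ⟨base, fun k hk ↦ ?_⟩
  obtain ⟨j, rfl⟩ : ∃ j, k = j + d + 1 := ⟨k - d - 1, by omega⟩
  have image := congrArg σ^[j] base
  rw [iterate_map_mul, iterate_map_mul, ← iterate_add_apply, ← iterate_add_apply,
    ← iterate_succ_apply] at image
  have index_eq : j + d + 1 - d = j + 1 := by omega
  rwa [index_eq, Nat.add_sub_cancel, Nat.add_sub_cancel]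

end Iterate

/-- (Lemma `finalteorecurs`.) Let `d ≥ 3`, `n = d² - 1`, `a ≠ 0` and
`b = (∏_{i=1}^{d-1} σ^{id}(a))⁻¹`. Then `σ^d(a)·b = σ(a)·σ^d(b)`, and consequently
`σ^{k-1}(a)·σ^{k-d-1}(b) = σ^{k-d}(a)·σ^{k-1}(b)` for every `k ≥ d+1`. -/
theorem stmt_11 (p q : ℕ) (hp : p.Prime) (hq : ∃ m : ℕ, 0 < m ∧ q = p ^ m)
    (K L : Type*) [Field K] [Field L] [Fintype K] [Fintype L] [Algebra K L]
    (hcardK : Fintype.card K = q)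
    (d : ℕ) (hd : 3 ≤ d)
    (n : ℕ) (hnval : n = d ^ 2 - 1) (hcardL : Fintype.card L = q ^ n)
    (s : ℕ) (hs : 0 < s) (hsn : Nat.gcd s n = 1)
    (σ : L ≃ₐ[K] L) (hσ : ∀ x : L, σ x = x ^ q ^ s)
    (a b : L) (ha : a ≠ 0)
    (hb : b = (∏ i ∈ Finset.Icc 1 (d - 1), (σ ^ (i * d)) a)⁻¹) :
    (σ ^ d) a * b = σ a * (σ ^ d) b
      ∧ ∀ k : ℕ, d + 1 ≤ k →
          (σ ^ (k - 1)) a * (σ ^ (k - d - 1)) b = (σ ^ (k - d)) a * (σ ^ (k - 1)) b := by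
  subst hnval
  have hdd : σ^[d * d] = σ :=
    iterate_mul_self_of_iterate_sq_sub_one (by omega) (iterate_eq_id_of_card_eq_pow hcardL hσ)
  simp only [AlgEquiv.coe_pow] at hb ⊢
  exact stmt_11_general σ (by omega) ha (congrFun hdd a) hb
end

section
/- Let n = 8 and let σ be a generator of Gal(F_{q^8}/F_q). For a, b ∈ F_{q^8}, the F_q-dimension of the kernel of a·x + b·x^σ − x^{σ^3} equals 3 if and only if the following hold: N_{q^8/q}(a) = 1; q ≡ 0 or 2 (mod 3); and there exists α ∈ F_{q^8} with α² + α + 1 = 0 and b = −α · (σ^6(a)·σ^3(a))^{−1}. -/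
/-!
Write `f x = a x + b σ(x) - σ³(x)`. A nonzero `σ`-linearized polynomial of `σ`-degree `d` has a
kernel of dimension at most `d`, because a root `v ≠ 0` splits off the right factor
`x ↦ σ(v⁻¹ x) - v⁻¹ x`, whose kernel is the line `K v`. Hence `dim ker f = 3` exactly when `f`
is a right divisor of `σ⁸ - 1`, which vanishes on `L`, that is, when the remainder of that
division, of `σ`-degree at most `2`, is zero. In terms of `u = -b σ⁶(a) σ³(a)` its three
coefficients vanish when `σ²(u) + σ⁵(u) + 1 = 0`, `u = σ³(u) σ⁵(u)` and
`σ(u) σ³(u) σ⁵(u) = N(a)`. The last two give `u σ(u) = N(a)`, so `σ²(u) = u`, and the system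
collapses to `σ(u) = u²`, `u² + u + 1 = 0` and `N(a) = 1`. Over finite fields `σ(u) = u²` is the
condition on `q` modulo `3`.
-/

open Module

theorem exists_sum_mul_eq_sum_mul_sub {R : Type*} [CommRing R] {n : ℕ} (d : Fin (n + 1) → R)
    (hd : ∑ i, d i = 0) :
    ∃ S : Fin n → R, ∀ y : ℕ → R, ∑ i, d i * y i = ∑ i, S i * (y (i + 1) - y i) := by
  induction n with
  | zero => exact ⟨0, fun y ↦ by simp_all⟩
  | succ n ih =>
    rw [Fin.sum_univ_succ, Fin.sum_univ_succ, ← add_assoc] at hd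
    obtain ⟨S, hS⟩ := ih (Fin.cons (d 0 + d 1) fun i ↦ d i.succ.succ)
      (by simpa [Fin.sum_univ_succ] using hd)
    refine ⟨Fin.cons (-d 0) S, fun y ↦ ?_⟩
    have hSy := hS fun i ↦ y (i + 1)
    simp only [Fin.sum_univ_succ, Fin.cons_zero, Fin.cons_succ, Fin.val_succ, Fin.val_zero,
      Fin.succ_zero_eq_one, zero_add] at hSy ⊢
    linear_combination hSy

theorem finrank_ker_comp_le {K V V' V'' : Type*} [DivisionRing K]
    [AddCommGroup V] [Module K V] [FiniteDimensional K V]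
    [AddCommGroup V'] [Module K V'] [FiniteDimensional K V']
    [AddCommGroup V''] [Module K V''] (g : V' →ₗ[K] V'') (f : V →ₗ[K] V') :
    finrank K (LinearMap.ker (g ∘ₗ f)) ≤
      finrank K (LinearMap.ker g) + finrank K (LinearMap.ker f) := by
  have hrank := f.lift_rank_comap_le (LinearMap.ker g)
  rw [← LinearMap.ker_comp] at hrank
  simp only [← finrank_eq_rank, Cardinal.lift_natCast] at hrank
  exact_mod_cast hrank

section LinearizedMap

variable {K L : Type*} [Field K] [Field L] [Algebra K L]

/-- The `K`-linear endomorphism `x ↦ ∑ i < n, c i * (σ ^ i) x` of `L` induced by the `σ`-linearized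
polynomial with coefficients `c`. The index type `Fin n` only bounds the `σ`-degree by `n - 1`:
leading coefficients may vanish. -/
noncomputable def linearizedMap (σ : L ≃ₐ[K] L) {n : ℕ} (c : Fin n → L) : L →ₗ[K] L :=
  ∑ i, LinearMap.mulLeft K (c i) ∘ₗ (σ ^ (i : ℕ)).toLinearMap

theorem linearizedMap_apply (σ : L ≃ₐ[K] L) {n : ℕ} (c : Fin n → L) (x : L) :
    linearizedMap σ c x = ∑ i, c i * (σ ^ (i : ℕ)) x := by
  simp [linearizedMap, LinearMap.sum_apply]

theorem exists_linearizedMap_eq_comp_of_apply_eq_zero {σ : L ≃ₐ[K] L} {n : ℕ}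
    {c : Fin (n + 1) → L} (hc : c ≠ 0) {v : L} (hv : v ≠ 0) (hcv : linearizedMap σ c v = 0) :
    ∃ S : Fin n → L, S ≠ 0 ∧ linearizedMap σ c =
      linearizedMap σ S ∘ₗ (σ.toLinearMap - LinearMap.id) ∘ₗ LinearMap.mulLeft K v⁻¹ := by
  rw [linearizedMap_apply] at hcv
  obtain ⟨S, hS⟩ := exists_sum_mul_eq_sum_mul_sub _ hcv
  refine ⟨S, ?_, ?_⟩
  · rintro rfl
    refine hc (funext fun j ↦ ?_)
    have hj : c j = 0 ∨ (σ ^ (j : ℕ)) v = 0 := by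
      simpa [Pi.single_apply, Fin.val_inj, -AlgEquiv.coe_pow] using hS (Pi.single j 1)
    exact hj.resolve_right ((map_ne_zero _).mpr hv)
  · ext x
    have hSx := hS fun i ↦ (σ ^ i) (v⁻¹ * x)
    simp only [mul_assoc, ← map_mul, mul_inv_cancel_left₀ hv] at hSx
    rw [linearizedMap_apply, hSx]
    simp [linearizedMap_apply]

theorem finrank_ker_sub_id_comp_mulLeft_inv_le_one {σ : L ≃ₐ[K] L}
    (hσ : ∀ x, σ x = x → x ∈ Set.range (algebraMap K L)) {v : L} (hv : v ≠ 0) :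
    finrank K (LinearMap.ker
      ((σ.toLinearMap - LinearMap.id) ∘ₗ LinearMap.mulLeft K v⁻¹)) ≤ 1 := by
  refine finrank_le_one ⟨v, by simp [hv]⟩ fun ⟨w, hw⟩ ↦ ?_
  obtain ⟨k, hk⟩ := hσ (v⁻¹ * w) (sub_eq_zero.mp hw)
  exact ⟨k, Subtype.ext <| by simp [Algebra.smul_def, hk, hv, mul_right_comm]⟩

variable [FiniteDimensional K L]

theorem finrank_ker_linearizedMap_lt {σ : L ≃ₐ[K] L}
    (hσ : ∀ x, σ x = x → x ∈ Set.range (algebraMap K L)) {n : ℕ} {c : Fin n → L} (hc : c ≠ 0) :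
    finrank K (LinearMap.ker (linearizedMap σ c)) < n := by
  induction n with
  | zero => exact absurd (Subsingleton.elim c 0) hc
  | succ n ih =>
    by_cases hker : LinearMap.ker (linearizedMap σ c) = ⊥
    · rw [hker, finrank_bot]
      exact n.succ_pos
    obtain ⟨v, hcv, hv⟩ := Submodule.exists_mem_ne_zero_of_ne_bot hker
    obtain ⟨S, hS, hcS⟩ := exists_linearizedMap_eq_comp_of_apply_eq_zero hc hv hcv
    calc finrank K (LinearMap.ker (linearizedMap σ c))
      _ ≤ finrank K (LinearMap.ker (linearizedMap σ S)) + finrank K (LinearMap.ker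
            ((σ.toLinearMap - LinearMap.id) ∘ₗ LinearMap.mulLeft K v⁻¹)) :=
          hcS ▸ finrank_ker_comp_le _ _
      _ < n + 1 :=
          add_lt_add_of_lt_of_le (ih hS) (finrank_ker_sub_id_comp_mulLeft_inv_le_one hσ hv)

theorem finrank_ker_linearizedMap_eq_iff {σ : L ≃ₐ[K] L}
    (hσ : ∀ x, σ x = x → x ∈ Set.range (algebraMap K L)) {d e : ℕ} (hL : finrank K L = d + e)
    {f : Fin (d + 1) → L} {g : Fin (e + 1) → L} {r : Fin d → L} (hf : f ≠ 0) (hg : g ≠ 0)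
    (hgf : linearizedMap σ g ∘ₗ linearizedMap σ f = linearizedMap σ r) :
    finrank K (LinearMap.ker (linearizedMap σ f)) = d ↔ r = 0 := by
  constructor
  · intro hker
    by_contra hr
    have hle := Submodule.finrank_mono
      (LinearMap.ker_le_ker_comp (linearizedMap σ f) (linearizedMap σ g))
    rw [hgf, hker] at hle
    exact (finrank_ker_linearizedMap_lt hσ hr).not_ge hle
  · rintro rfl
    have hrange : LinearMap.range (linearizedMap σ f) ≤ LinearMap.ker (linearizedMap σ g) :=
      LinearMap.range_le_ker_iff.mpr (by ext; simp [hgf, linearizedMap_apply])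
    have hrange_le := Submodule.finrank_mono hrange
    have hker_f := finrank_ker_linearizedMap_lt hσ hf
    have hker_g := finrank_ker_linearizedMap_lt hσ hg
    have hrank_nullity := (linearizedMap σ f).finrank_range_add_finrank_ker
    lia

end LinearizedMap

section CyclicExtension

variable {K L : Type*} [Field K] [Field L] [Algebra K L] [FiniteDimensional K L] [IsGalois K L]

theorem galois_pow_finrank_eq_one (σ : L ≃ₐ[K] L) : σ ^ finrank K L = 1 := by
  rw [← IsGalois.card_aut_eq_finrank, pow_card_eq_one']

theorem mem_range_algebraMap_of_generator_apply_eq {σ : L ≃ₐ[K] L}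
    (hσ : ∀ τ, τ ∈ Subgroup.zpowers σ) {x : L} (hx : σ x = x) :
    x ∈ Set.range (algebraMap K L) := by
  refine (IsGalois.mem_range_algebraMap_iff_fixed x).mpr fun τ ↦ ?_
  have hstab : Subgroup.zpowers σ ≤ MulAction.stabilizer (L ≃ₐ[K] L) x := by simpa using hx
  exact hstab (hσ τ)

theorem algebraMap_norm_eq_prod_generator_pow {σ : L ≃ₐ[K] L}
    (hσ : ∀ τ, τ ∈ Subgroup.zpowers σ) (x : L) :
    algebraMap K L (Algebra.norm K x) = ∏ i ∈ Finset.range (finrank K L), (σ ^ i) x := by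
  classical
  have horder : orderOf σ = finrank K L := by
    rw [orderOf_eq_card_of_forall_mem_zpowers hσ, IsGalois.card_aut_eq_finrank]
  rw [Algebra.norm_eq_prod_automorphisms, ← IsCyclic.image_range_orderOf hσ, horder,
    Finset.prod_image]
  simpa [← horder] using pow_injOn_Iio_orderOf (x := σ)

end CyclicExtension

section Trinomial

variable {K L : Type*} [Field K] [Field L] [Algebra K L]

/-- The coefficients of the quotient in the right division of `x^{σ⁸} - x` by
`x^{σ³} - b x^σ - a x`. -/
noncomputable def trinomialQuotient (σ : L ≃ₐ[K] L) (a b : L) : Fin 6 → L :=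
  ![(σ ^ 5) a * (σ ^ 2) b + (σ ^ 5) b * (σ ^ 3) a, (σ ^ 5) b * (σ ^ 3) b, (σ ^ 5) a, (σ ^ 5) b,
    0, 1]

/-- The coefficients of the remainder in the right division of `x^{σ⁸} - x` by
`x^{σ³} - b x^σ - a x`. -/
noncomputable def trinomialRemainder (σ : L ≃ₐ[K] L) (a b : L) : Fin 3 → L :=
  ![a * ((σ ^ 5) a * (σ ^ 2) b + (σ ^ 5) b * (σ ^ 3) a) - 1,
    b * ((σ ^ 5) a * (σ ^ 2) b + (σ ^ 5) b * (σ ^ 3) a) + (σ ^ 5) b * (σ ^ 3) b * σ a,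
    (σ ^ 5) a * (σ ^ 2) a + (σ ^ 5) b * (σ ^ 3) b * σ b]

theorem trinomial_eq_linearizedMap (σ : L ≃ₐ[K] L) (a b : L) :
    LinearMap.mulLeft K a + LinearMap.mulLeft K b ∘ₗ σ.toLinearMap
      - (σ ^ 3 : L ≃ₐ[K] L).toLinearMap = linearizedMap σ ![a, b, 0, -1] := by
  ext x
  simp [linearizedMap_apply, Fin.sum_univ_succ, ← sub_eq_add_neg, ← add_sub_assoc]

theorem trinomialQuotient_comp_trinomial {σ : L ≃ₐ[K] L} (hσ : σ ^ 8 = 1) (a b : L) :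
    linearizedMap σ (trinomialQuotient σ a b) ∘ₗ linearizedMap σ ![a, b, 0, -1] =
      linearizedMap σ (trinomialRemainder σ a b) := by
  ext x
  have hσx : (σ ^ 8) x = x := by rw [hσ, AlgEquiv.one_apply]
  simp only [AlgEquiv.coe_pow, Function.iterate_succ_apply', Function.iterate_zero, id] at hσx
  simp only [LinearMap.comp_apply, linearizedMap_apply, trinomialQuotient, trinomialRemainder,
    Fin.sum_univ_succ, Fin.sum_univ_zero, Matrix.cons_val_zero, Matrix.cons_val_succ, Fin.val_zero,
    Fin.val_succ, AlgEquiv.coe_pow, Function.iterate_succ_apply', Function.iterate_zero, id,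
    map_add, map_mul, map_neg, map_one, map_zero, hσx]
  ring

theorem trinomialRemainder_eq_of_eq_neg_mul_inv {σ : L ≃ₐ[K] L} (hσ : σ ^ 8 = 1) {a b u : L}
    (ha : a ≠ 0) (hb : b = -u * ((σ ^ 6) a * (σ ^ 3) a)⁻¹) :
    trinomialRemainder σ a b =
      ![-((σ ^ 2) u + (σ ^ 5) u + 1),
        (u * ((σ ^ 2) u + (σ ^ 5) u) + (σ ^ 3) u * (σ ^ 5) u) / (a * (σ ^ 3) a * (σ ^ 6) a),
        (∏ i ∈ Finset.range 8, (σ ^ i) a - σ u * (σ ^ 3) u * (σ ^ 5) u) /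
          (a * σ a * (σ ^ 3) a * (σ ^ 4) a * (σ ^ 6) a * (σ ^ 7) a)] := by
  have hσ9 : σ ^ 9 = σ := by rw [pow_succ, hσ, one_mul]
  have hσ11 : σ ^ 11 = σ ^ 3 := by rw [pow_add σ 8 3, hσ, one_mul]
  have ha1 : σ a ≠ 0 := (map_ne_zero _).mpr ha
  have ha_ne (i : ℕ) : (σ ^ i) a ≠ 0 := (map_ne_zero _).mpr ha
  have ha3 := ha_ne 3
  have ha4 := ha_ne 4
  have ha5 := ha_ne 5
  have ha6 := ha_ne 6
  have ha7 := ha_ne 7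
  subst hb
  simp only [trinomialRemainder, map_mul, map_neg, map_inv₀, ← AlgEquiv.mul_apply, ← pow_add,
    ← pow_succ', Nat.reduceAdd, hσ, hσ9, hσ11, Finset.prod_range_succ, Finset.prod_range_zero,
    pow_zero, pow_one, AlgEquiv.one_apply]
  refine Matrix.vec3_eq ?_ ?_ ?_ <;> field_simp <;> ring

theorem trinomialRemainder_eq_zero_iff_of_eq_neg_mul_inv {σ : L ≃ₐ[K] L} (hσ : σ ^ 8 = 1)
    {a b u : L} (ha : a ≠ 0) (hb : b = -u * ((σ ^ 6) a * (σ ^ 3) a)⁻¹) :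
    trinomialRemainder σ a b = 0 ↔
      (σ ^ 2) u + (σ ^ 5) u + 1 = 0 ∧ u = (σ ^ 3) u * (σ ^ 5) u ∧
        σ u * (σ ^ 3) u * (σ ^ 5) u = ∏ i ∈ Finset.range 8, (σ ^ i) a := by
  have ha_ne (i : ℕ) : (σ ^ i) a ≠ 0 := (map_ne_zero _).mpr ha
  have ha1 : σ a ≠ 0 := (map_ne_zero _).mpr ha
  rw [trinomialRemainder_eq_of_eq_neg_mul_inv hσ ha hb]
  simp only [Matrix.cons_eq_zero_iff, Matrix.zero_empty, and_true, neg_eq_zero, div_eq_zero_iff,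
    mul_eq_zero, ha, ha1, ha_ne, or_false]
  refine and_congr_right fun hsum ↦ and_congr ⟨fun h ↦ ?_, fun h ↦ ?_⟩ (sub_eq_zero.trans eq_comm)
  · linear_combination u * hsum - h
  · linear_combination u * hsum - h

theorem sum_prod_system_iff_apply_eq_sq {σ : L ≃ₐ[K] L} {u N : L} (hN : N ≠ 0) (hσN : σ N = N) :
    ((σ ^ 2) u + (σ ^ 5) u + 1 = 0 ∧ u = (σ ^ 3) u * (σ ^ 5) u ∧
        σ u * (σ ^ 3) u * (σ ^ 5) u = N) ↔
      N = 1 ∧ u ^ 2 + u + 1 = 0 ∧ σ u = u ^ 2 := by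
  have pow_apply_of_sq (h : σ (σ u) = u) : (σ ^ 2) u = u ∧ (σ ^ 3) u = σ u ∧ (σ ^ 5) u = σ u := by
    simp [Function.iterate_succ_apply', h]
  constructor
  · rintro ⟨hsum, hprod, hnorm⟩
    have hu_mul : σ u * u = N := by rw [← hnorm, mul_assoc, ← hprod]
    have hσσu : σ (σ u) = u := by
      refine mul_right_cancel₀ (left_ne_zero_of_mul (hu_mul ▸ hN)) ?_
      rw [← map_mul, hu_mul, hσN, ← hu_mul, mul_comm]
    obtain ⟨h2, h3, h5⟩ := pow_apply_of_sq hσσu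
    rw [h3, h5] at hprod
    have hσu : σ u = u ^ 2 := by simpa [hσσu, sq] using congrArg σ hprod
    rw [h2, h5, hσu] at hsum
    refine ⟨?_, by linear_combination hsum, hσu⟩
    rw [← hu_mul, hσu]
    linear_combination (u - 1) * hsum
  · rintro ⟨rfl, hu, hσu⟩
    have hu3 : u ^ 3 = 1 := by linear_combination (u - 1) * hu
    have hσσu : σ (σ u) = u := by
      rw [hσu, map_pow, hσu]
      linear_combination u * hu3
    obtain ⟨h2, h3, h5⟩ := pow_apply_of_sq hσσu
    rw [h2, h3, h5, hσu]
    exact ⟨by linear_combination hu, by linear_combination -u * hu3,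
      by linear_combination (u ^ 3 + 1) * hu3⟩

end Trinomial

section FiniteField

theorem pow_eq_sq_iff_of_sq_add_self_add_one_eq_zero {L : Type*} [Field L] {α : L}
    (hα : α ^ 2 + α + 1 = 0) (m : ℕ) : α ^ m = α ^ 2 ↔ (3 : L) = 0 ∨ m % 3 = 2 := by
  have hα3 : α ^ 3 = 1 := by linear_combination (α - 1) * hα
  have hα1 : (3 : L) = 0 ↔ α = 1 := by
    refine ⟨fun h ↦ ?_, fun h ↦ by rw [h] at hα; linear_combination hα⟩
    have hsq : (α - 1) ^ 2 = 0 := by linear_combination hα - α * h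
    exact sub_eq_zero.mp (eq_zero_of_pow_eq_zero hsq)
  have hm : m % 3 = 0 ∨ m % 3 = 1 ∨ m % 3 = 2 := by lia
  rw [hα1, pow_eq_pow_mod m hα3]
  constructor
  · intro h
    rcases hm with hm | hm | hm <;> rw [hm] at h
    · exact .inl (by linear_combination hα3 + α * h)
    · exact .inl (by linear_combination hα3 + (α + 1) * h)
    · exact .inr hm
  · rintro (rfl | hm)
    · simp
    · rw [hm]

theorem natCast_prime_eq_zero_iff_dvd_card {F : Type*} [Field F] [Fintype F] {p : ℕ}
    (hp : p.Prime) : (p : F) = 0 ↔ p ∣ Fintype.card F := by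
  have := Fact.mk hp
  rw [← prime_dvd_char_iff_dvd_card, ← not_iff_not, ← isUnit_iff_not_dvd_char, isUnit_iff_ne_zero]

theorem pow_mod_three_eq_two_iff_of_odd {q s : ℕ} (hs : Odd s) :
    q ^ s % 3 = 2 ↔ q % 3 = 2 := by
  obtain ⟨k, rfl⟩ := hs
  have hq : q % 3 = 0 ∨ q % 3 = 1 ∨ q % 3 = 2 := by lia
  rcases hq with h | h | h <;> simp [h, pow_add, pow_mul, Nat.mul_mod, Nat.pow_mod]

theorem pow_card_pow_eq_sq_iff {K L : Type*} [Field K] [Fintype K] [Field L] [Algebra K L] {α : L}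
    (hα : α ^ 2 + α + 1 = 0) {s : ℕ} (hs : Odd s) :
    α ^ Fintype.card K ^ s = α ^ 2 ↔ Fintype.card K % 3 = 0 ∨ Fintype.card K % 3 = 2 := by
  have h3 : (3 : L) = 0 ↔ Fintype.card K % 3 = 0 := by
    rw [← Nat.dvd_iff_mod_eq_zero, ← natCast_prime_eq_zero_iff_dvd_card Nat.prime_three,
      ← map_eq_zero (algebraMap K L), map_natCast, Nat.cast_ofNat]
  rw [pow_eq_sq_iff_of_sq_add_self_add_one_eq_zero hα, h3, pow_mod_three_eq_two_iff_of_odd hs]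

theorem mem_zpowers_of_apply_eq_pow_card_pow {K L : Type*} [Field K] [Fintype K] [Field L]
    [Finite L] [Algebra K L] {s : ℕ} (hs : s.Coprime (finrank K L)) {σ : L ≃ₐ[K] L}
    (hσ : ∀ x, σ x = x ^ Fintype.card K ^ s) (τ : L ≃ₐ[K] L) : τ ∈ Subgroup.zpowers σ := by
  set φ := FiniteField.frobeniusAlgEquivOfAlgebraic K L
  obtain rfl : σ = φ ^ s := by
    ext x
    rw [hσ, AlgEquiv.coe_pow, FiniteField.coe_frobeniusAlgEquivOfAlgebraic_iterate]
  have hφ : φ ∈ Subgroup.zpowers (φ ^ s) := by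
    rwa [mem_zpowers_pow_iff, FiniteField.orderOf_frobeniusAlgEquivOfAlgebraic]
  obtain ⟨n, rfl⟩ := (FiniteField.bijective_frobeniusAlgEquivOfAlgebraic_pow K L).2 τ
  exact pow_mem hφ _

theorem norm_eq_one_iff_pow_eq_one {K L : Type*} [Field K] [Fintype K] [Field L] [Fintype L]
    [Algebra K L] (a : L) :
    Algebra.norm K a = 1 ↔ a ^ ((Fintype.card L - 1) / (Fintype.card K - 1)) = 1 := by
  rw [← (algebraMap K L).injective.eq_iff, map_one, FiniteField.algebraMap_norm_eq_pow,
    Nat.card_eq_fintype_card, Nat.card_eq_fintype_card]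

end FiniteField

theorem stmt_12_general {K L : Type*} [Field K] [Field L] [Algebra K L] [IsGalois K L]
    (hL : finrank K L = 8) {σ : L ≃ₐ[K] L} (hσ : ∀ τ, τ ∈ Subgroup.zpowers σ) (a b : L) :
    finrank K
      (LinearMap.ker
        (LinearMap.mulLeft K a + LinearMap.mulLeft K b ∘ₗ σ.toLinearMap
          - (σ ^ 3 : L ≃ₐ[K] L).toLinearMap)) = 3
      ↔ Algebra.norm K a = 1
          ∧ ∃ α : L, α ^ 2 + α + 1 = 0 ∧ σ α = α ^ 2 ∧ b = -α * ((σ ^ 6) a * (σ ^ 3) a)⁻¹ := by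
  have : FiniteDimensional K L := .of_finrank_pos (by simp [hL])
  have hσ8 : σ ^ 8 = 1 := hL ▸ galois_pow_finrank_eq_one σ
  have hsolve {u : L} (ha : a ≠ 0) (hb : b = -u * ((σ ^ 6) a * (σ ^ 3) a)⁻¹) :
      trinomialRemainder σ a b = 0 ↔ Algebra.norm K a = 1 ∧ u ^ 2 + u + 1 = 0 ∧ σ u = u ^ 2 := by
    rw [trinomialRemainder_eq_zero_iff_of_eq_neg_mul_inv hσ8 ha hb, ← hL,
      ← algebraMap_norm_eq_prod_generator_pow hσ,
      sum_prod_system_iff_apply_eq_sq (by simpa using ha) (σ.commutes _)]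
    simp
  rw [trinomial_eq_linearizedMap, finrank_ker_linearizedMap_eq_iff (e := 5)
    (fun _ ↦ mem_range_algebraMap_of_generator_apply_eq hσ) hL (by simp)
    (by simp [trinomialQuotient]) (trinomialQuotient_comp_trinomial hσ8 a b)]
  constructor
  · intro hrem
    have ha : a ≠ 0 := by
      rintro rfl
      simp [trinomialRemainder] at hrem
    have hb : b = -(-b * ((σ ^ 6) a * (σ ^ 3) a)) * ((σ ^ 6) a * (σ ^ 3) a)⁻¹ := by
      rw [neg_mul b, neg_neg, mul_inv_cancel_right₀]
      exact mul_ne_zero ((map_ne_zero _).mpr ha) ((map_ne_zero _).mpr ha)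
    obtain ⟨hnorm, hα, hσα⟩ := (hsolve ha hb).mp hrem
    exact ⟨hnorm, _, hα, hσα, hb⟩
  · rintro ⟨hnorm, α, hα, hσα, hb⟩
    have ha : a ≠ 0 := by
      rintro rfl
      simp at hnorm
    exact (hsolve ha hb).mpr ⟨hnorm, hα, hσα⟩

/-- (Last case of Proposition `prop:d=3`.) Let `n = 8` and `σ` a generator
of `Gal(F_{q^8}/F_q)`, i.e. `σ : x ↦ x^{q^s}` with `gcd(s,8) = 1`. For `a, b ∈ F_{q^8}`,
the `F_q`-dimension of the kernel of `a·x + b·x^σ − x^{σ³}` equals `3` iff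
`N_{q^8/q}(a) = 1`, `q ≡ 0 or 2 (mod 3)`, and `b = −α·(σ⁶(a)·σ³(a))⁻¹` for a root `α` of
`x² + x + 1`. -/
theorem stmt_12 (p q : ℕ) (hp : p.Prime) (hq : ∃ m : ℕ, 0 < m ∧ q = p ^ m)
    (K L : Type*) [Field K] [Field L] [Fintype K] [Fintype L] [Algebra K L]
    (hcardK : Fintype.card K = q) (hcardL : Fintype.card L = q ^ 8)
    (s : ℕ) (hs : 0 < s) (hsn : Nat.gcd s 8 = 1)
    (σ : L ≃ₐ[K] L) (hσ : ∀ x : L, σ x = x ^ q ^ s)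
    (a b : L) :
    Module.finrank K
      (LinearMap.ker
        (LinearMap.mulLeft K a + LinearMap.mulLeft K b ∘ₗ σ.toLinearMap
          - (σ ^ 3 : L ≃ₐ[K] L).toLinearMap)) = 3
      ↔ (a ^ ((q ^ 8 - 1) / (q - 1)) = 1
          ∧ (q % 3 = 0 ∨ q % 3 = 2)
          ∧ ∃ α : L, α ^ 2 + α + 1 = 0 ∧ b = -α * ((σ ^ 6) a * (σ ^ 3) a)⁻¹) := by
  subst hcardK
  have hL : finrank K L = 8 :=
    Nat.pow_right_injective (Fintype.one_lt_card (α := K))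
      (Module.card_eq_pow_finrank.symm.trans hcardL)
  have hodd : Odd s := Nat.coprime_two_right.mp (Nat.Coprime.coprime_dvd_right (by norm_num) hsn)
  have hσ_sq (α : L) (hα : α ^ 2 + α + 1 = 0) :
      σ α = α ^ 2 ↔ Fintype.card K % 3 = 0 ∨ Fintype.card K % 3 = 2 := by
    rw [hσ, pow_card_pow_eq_sq_iff hα hodd]
  rw [stmt_12_general hL (mem_zpowers_of_apply_eq_pow_card_pow (hL ▸ hsn) hσ),
    norm_eq_one_iff_pow_eq_one, hcardL]
  exact and_congr_right fun _ ↦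
    ⟨fun ⟨α, hα, hσα, hb⟩ ↦ ⟨(hσ_sq α hα).mp hσα, α, hα, hb⟩,
      fun ⟨hq3, α, hα, hb⟩ ↦ ⟨α, hα, (hσ_sq α hα).mpr hq3, hb⟩⟩
end
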